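/- arXiv:1809.04091 — 5 statements merged into one kernel-verified Lean document; each statement's English description precedes it below -/
import Mathlib

section
/- Let 0 < μ ≤ L, let g_1,…,g_n : ℝ^D → ℝ be differentiable functions, each μ-strongly convex with L-Lipschitz continuous gradient, and let g = (1/n)·Σ_{i=1}^n g_i. Then for all w, w_* ∈ ℝ^D: ⟨∇g(w), w_* − w⟩ ≤ ((L−μ)/L)·[g(w_*) − g(w)] − (μ/2)·‖w_* − w‖² − (1/(2Ln))·Σ_{i=1}^n ‖∇g_i(w_*) − ∇g_i(w)‖² − (μ/L)·⟨∇g(w_*), w − w_*⟩. -/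
open scoped RealInnerProductSpace

theorem saga_descent {E : Type*} [NormedAddCommGroup E] [InnerProductSpace ℝ E] [CompleteSpace E]
    (L : ℝ) (f : E → ℝ) (f' : E → E) (hd : ∀ w, HasGradientAt f (f' w) w)
    (hlip : ∀ u v, ‖f' u - f' v‖ ≤ L * ‖u - v‖) (y s : E) :
    f (y + s) ≤ f y + ⟪f' y, s⟫ + L / 2 * ‖s‖ ^ 2 := by
  have hder : ∀ t : ℝ, HasDerivAt
      (fun t : ℝ => f (y + t • s) - (t * ⟪f' y, s⟫ + L / 2 * ‖s‖ ^ 2 * t ^ 2))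
      (⟪f' (y + t • s), s⟫ - (⟪f' y, s⟫ + L * ‖s‖ ^ 2 * t)) t := by
    intro t
    have h1 : HasDerivAt (fun t : ℝ => y + t • s) s t := by
      simpa using ((hasDerivAt_id t).smul_const s).const_add y
    have h2 := (hd (y + t • s)).hasFDerivAt.comp_hasDerivAt t h1
    have h3 : HasDerivAt (fun t : ℝ => t * ⟪f' y, s⟫ + L / 2 * ‖s‖ ^ 2 * t ^ 2)
        (⟪f' y, s⟫ + L * ‖s‖ ^ 2 * t) t := by
      have := ((hasDerivAt_id t).mul_const ⟪f' y, s⟫).add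
        (((hasDerivAt_id t).pow 2).const_mul (L / 2 * ‖s‖ ^ 2))
      refine HasDerivAt.congr_deriv this ?_
      simp
      ring
    have h4 := h2.sub h3
    exact HasDerivAt.congr_deriv h4 (by simp)
  have hanti := antitoneOn_of_deriv_nonpos (convex_Icc (0 : ℝ) 1)
    (fun t _ => (hder t).continuousAt.continuousWithinAt)
    (fun t _ => (hder t).differentiableAt.differentiableWithinAt)
    (by
      intro t ht
      rw [interior_Icc] at ht
      rw [(hder t).deriv]
      have h1 : ⟪f' (y + t • s) - f' y, s⟫ ≤ L * ‖s‖ ^ 2 * t := by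
        calc ⟪f' (y + t • s) - f' y, s⟫ ≤ ‖f' (y + t • s) - f' y‖ * ‖s‖ := real_inner_le_norm _ _
          _ ≤ (L * ‖(y + t • s) - y‖) * ‖s‖ := by gcongr; exact hlip _ _
          _ = L * ‖s‖ ^ 2 * t := by
            rw [add_sub_cancel_left, norm_smul, Real.norm_of_nonneg ht.1.le]; ring
      rw [inner_sub_left] at h1
      linarith)
  have := hanti (Set.left_mem_Icc.2 zero_le_one) (Set.right_mem_Icc.2 zero_le_one) zero_le_one
  simp at this
  linarith

theorem saga_single {E : Type*} [NormedAddCommGroup E] [InnerProductSpace ℝ E] [CompleteSpace E]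
    (μ L : ℝ) (hμ : 0 < μ) (hμL : μ ≤ L)
    (f : E → ℝ) (f' : E → E) (hd : ∀ w, HasGradientAt f (f' w) w)
    (hsc : ∀ u v, f u ≥ f v + ⟪f' v, u - v⟫ + (μ / 2) * ‖u - v‖ ^ 2)
    (hlip : ∀ u v, ‖f' u - f' v‖ ≤ L * ‖u - v‖) (x y : E) :
    ⟪f' x, y - x⟫ ≤ (L - μ) / L * (f y - f x) - (μ / 2) * ‖y - x‖ ^ 2
      - (1 / (2 * L)) * ‖f' y - f' x‖ ^ 2 + (μ / L) * ⟪f' y, y - x⟫ := by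
  have hL : 0 < L := lt_of_lt_of_le hμ hμL
  obtain ⟨p, hp⟩ : ∃ p, p = y - x := ⟨_, rfl⟩
  obtain ⟨d, hdd⟩ : ∃ d, d = f' y - f' x := ⟨_, rfl⟩
  have hfy : f' y = f' x + d := by rw [hdd]; abel
  rw [← hp, ← hdd]
  suffices h : L * ⟪f' x, p⟫ ≤ (L - μ) * (f y - f x) - L * (μ / 2) * ‖p‖ ^ 2
      - (1 / 2) * ‖d‖ ^ 2 + μ * ⟪f' y, p⟫ by
    have h2 : ⟪f' x, p⟫ ≤ ((L - μ) * (f y - f x) - L * (μ / 2) * ‖p‖ ^ 2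
      - (1 / 2) * ‖d‖ ^ 2 + μ * ⟪f' y, p⟫) / L := by
      rw [le_div_iff₀ hL]; linarith
    refine h2.trans (le_of_eq ?_)
    field_simp
  rw [hfy, inner_add_left]
  rcases hμL.eq_or_lt with heq | hlt
  · have h1 := hsc x y
    have h2 := hsc y x
    have h3 := hlip y x
    rw [← neg_sub y x, norm_neg, inner_neg_right, ← hp, hfy, inner_add_left] at h1
    rw [← hp] at h2 h3
    rw [← hdd] at h3
    have h4 : ‖d‖ ^ 2 ≤ (L * ‖p‖) ^ 2 := by gcongr
    subst heq
    have h5 : μ * (μ * ‖p‖ ^ 2) ≤ μ * ⟪d, p⟫ := by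
      apply mul_le_mul_of_nonneg_left _ hμ.le
      linarith
    nlinarith
  · have hpos : 0 < L - μ := sub_pos.2 hlt
    obtain ⟨s, hs⟩ : ∃ s, s = (L - μ)⁻¹ • (μ • p - d) := ⟨_, rfl⟩
    have hs' : d = μ • p - (L - μ) • s := by
      rw [hs, smul_smul, mul_inv_cancel₀ hpos.ne', one_smul]; abel
    have h1 := saga_descent L f f' hd hlip y s
    have h2 := hsc (y + s) x
    have h3 : y + s - x = p + s := by rw [hp]; abel
    rw [h3, norm_add_sq_real, inner_add_right] at h2
    rw [hfy, inner_add_left] at h1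
    have h4 : ⟪d, s⟫ = μ * ⟪p, s⟫ - (L - μ) * ‖s‖ ^ 2 := by
      rw [hs', inner_sub_left, real_inner_smul_left, real_inner_smul_left,
        real_inner_self_eq_norm_sq]
    have h5 : ⟪d, p⟫ = μ * ‖p‖ ^ 2 - (L - μ) * ⟪p, s⟫ := by
      rw [hs', inner_sub_left, real_inner_smul_left, real_inner_smul_left,
        real_inner_self_eq_norm_sq, real_inner_comm]
    have h6 : ‖d‖ ^ 2 = μ ^ 2 * ‖p‖ ^ 2 - 2 * μ * (L - μ) * ⟪p, s⟫ + (L - μ) ^ 2 * ‖s‖ ^ 2 := by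
      rw [hs', norm_sub_sq_real, norm_smul, norm_smul, real_inner_smul_left,
        real_inner_smul_right, mul_pow, mul_pow, Real.norm_eq_abs, Real.norm_eq_abs, sq_abs, sq_abs]
      ring
    rw [h4] at h1
    rw [h5, h6]
    have h7 : ⟪f' x, p⟫ + μ / 2 * ‖p‖ ^ 2 + (L - μ) / 2 * ‖s‖ ^ 2 ≤ f y - f x := by linarith
    have h8 := mul_le_mul_of_nonneg_left h7 hpos.le
    linarith

/-- (First auxiliary lemma for A-SAGA.) If each `g_i` is `μ`-strongly
convex with `L`-Lipschitz gradient (`0 < μ ≤ L`) and `g = (1/n)·Σ_i g_i`, then for all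
`w, w_*`:
`⟨∇g(w), w_*−w⟩ ≤ ((L−μ)/L)[g(w_*)−g(w)] − (μ/2)‖w_*−w‖²
  − (1/(2Ln))·Σ_i ‖∇g_i(w_*)−∇g_i(w)‖² − (μ/L)⟨∇g(w_*), w−w_*⟩`. -/
theorem saga_inner_product_bound {D n : ℕ} (hn : 0 < n) (μ L : ℝ)
    (hμ : 0 < μ) (hμL : μ ≤ L)
    (g : Fin n → EuclideanSpace ℝ (Fin D) → ℝ)
    (g' : Fin n → EuclideanSpace ℝ (Fin D) → EuclideanSpace ℝ (Fin D))
    (hdiff : ∀ i w, HasGradientAt (g i) (g' i w) w)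
    (hsc : ∀ i, ∀ u v : EuclideanSpace ℝ (Fin D),
      g i u ≥ g i v + ⟪g' i v, u - v⟫ + (μ / 2) * ‖u - v‖ ^ 2)
    (hlip : ∀ i, ∀ u v : EuclideanSpace ℝ (Fin D),
      ‖g' i u - g' i v‖ ≤ L * ‖u - v‖)
    (G : EuclideanSpace ℝ (Fin D) → ℝ)
    (G' : EuclideanSpace ℝ (Fin D) → EuclideanSpace ℝ (Fin D))
    (hG : ∀ w, G w = (1 / n : ℝ) * ∑ i, g i w)
    (hG' : ∀ w, HasGradientAt G (G' w) w)
    (w wstar : EuclideanSpace ℝ (Fin D)) :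
    ⟪G' w, wstar - w⟫ ≤
      (L - μ) / L * (G wstar - G w) - (μ / 2) * ‖wstar - w‖ ^ 2
        - (1 / (2 * L * n)) * ∑ i, ‖g' i wstar - g' i w‖ ^ 2
        - (μ / L) * ⟪G' wstar, w - wstar⟫ := by
  have hgrad : ∀ v, G' v = (1 / n : ℝ) • ∑ i, g' i v := by
    intro v
    have h1 : HasFDerivAt G ((1 / n : ℝ) • ∑ i, (InnerProductSpace.toDual ℝ _) (g' i v)) v := by
      have h2 := (HasFDerivAt.fun_sum (u := Finset.univ)
        (fun i _ => (hdiff i v).hasFDerivAt)).const_mul (1 / n : ℝ)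
      have : G = fun w => (1 / n : ℝ) * ∑ i, g i w := funext hG
      rw [this]
      exact h2
    have h3 := (hG' v).hasFDerivAt.unique h1
    apply (InnerProductSpace.toDual ℝ (EuclideanSpace ℝ (Fin D))).injective
    rw [h3, map_smulₛₗ, map_sum]
    simp
  have hn' : (0 : ℝ) < n := Nat.cast_pos.2 hn
  have hL : 0 < L := lt_of_lt_of_le hμ hμL
  have key := Finset.sum_le_sum (s := Finset.univ) (fun i _ =>
    saga_single μ L hμ hμL (g i) (g' i) (hdiff i) (hsc i) (hlip i) w wstar)
  have key2 := mul_le_mul_of_nonneg_left key (by positivity : (0 : ℝ) ≤ 1 / n)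
  rw [hgrad, hgrad, hG, hG, real_inner_smul_left, real_inner_smul_left, sum_inner, sum_inner]
  refine key2.trans (le_of_eq ?_)
  have hneg : ∀ i, ⟪g' i wstar, w - wstar⟫ = -⟪g' i wstar, wstar - w⟫ := by
    intro i
    rw [← inner_neg_right, neg_sub]
  simp only [hneg, Finset.sum_add_distrib, Finset.sum_sub_distrib, ← Finset.mul_sum,
    Finset.sum_neg_distrib, Finset.sum_const, Finset.card_univ, Fintype.card_fin, nsmul_eq_mul]
  field_simp
  try ring
end

section
/- Let g_1,…,g_n : ℝ^D → ℝ be differentiable, g = (1/n)·Σ_{i=1}^n g_i, let φ_1,…,φ_n, w, w_* ∈ ℝ^D, and let α > 0. For each j ∈ {1,…,n} define X_j = ∇g_j(w) − ∇g_j(φ_j) + (1/n)·Σ_{i=1}^n ∇g_i(φ_i) − ∇g(w_*). Then: (i) the average over j satisfies (1/n)·Σ_{j=1}^n X_j = ∇g(w) − ∇g(w_*); and (ii) (1/n)·Σ_{j=1}^n ‖X_j‖² ≤ (1 + α^{-1})·(1/n)·Σ_{j=1}^n ‖∇g_j(φ_j) − ∇g_j(w_*)‖² + (1 + α)·(1/n)·Σ_{j=1}^n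 ‖∇g_j(w) − ∇g_j(w_*)‖² − α·‖∇g(w) − ∇g(w_*)‖². -/
open scoped RealInnerProductSpace

theorem saga_pointwise {E : Type*} [NormedAddCommGroup E] [InnerProductSpace ℝ E]
    (a b A B : E) (α : ℝ) (hα : 0 < α) :
    ‖a - b + B‖ ^ 2 ≤ (1 + α⁻¹) * (‖b‖ ^ 2 - 2 * ⟪b, B⟫ + ‖B‖ ^ 2)
      + (1 + α) * (‖a‖ ^ 2 - 2 * ⟪a, A⟫ + ‖A‖ ^ 2)
      + (2 * ⟪a, A⟫ - ‖A‖ ^ 2 - 2 * ⟪b, A⟫ + 2 * ⟪B, A⟫) := by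
  have h1 : a - b + B = ((a - A) - (b - B)) + A := by abel
  have h2 : ‖a - b + B‖ ^ 2 = ‖a - A‖ ^ 2 - 2 * ⟪a - A, b - B⟫ + ‖b - B‖ ^ 2
      + 2 * ⟪(a - A) - (b - B), A⟫ + ‖A‖ ^ 2 := by
    rw [h1, norm_add_sq_real, norm_sub_sq_real]
  have h3 : ⟪(a - A) - (b - B), A⟫ = ⟪a, A⟫ - ‖A‖ ^ 2 - ⟪b, A⟫ + ⟪B, A⟫ := by
    simp only [inner_sub_left, real_inner_self_eq_norm_sq]; ring
  have h4 := abs_real_inner_le_norm (a - A) (b - B)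
  have h5 := (abs_le.mp h4).1
  have h6 : 2 * (‖a - A‖ * ‖b - B‖) ≤ α * ‖a - A‖ ^ 2 + α⁻¹ * ‖b - B‖ ^ 2 := by
    have h : 0 ≤ α⁻¹ * (α * ‖a - A‖ - ‖b - B‖) ^ 2 := by positivity
    have e : α⁻¹ * (α * ‖a - A‖ - ‖b - B‖) ^ 2
        = α * ‖a - A‖ ^ 2 + α⁻¹ * ‖b - B‖ ^ 2 - 2 * (‖a - A‖ * ‖b - B‖) := by
      field_simp; ring
    linarith
  rw [← norm_sub_sq_real, ← norm_sub_sq_real, h2, h3]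
  linarith

theorem saga_average {E : Type*} [NormedAddCommGroup E] [InnerProductSpace ℝ E] {n : ℕ}
    (hn : 0 < n) (a b : Fin n → E) (A B : E) (α : ℝ) (hα : 0 < α)
    (hA : ∑ j, a j = (n : ℝ) • A) (hB : ∑ j, b j = (n : ℝ) • B) :
    (1 / n : ℝ) * ∑ j, ‖a j - b j + B‖ ^ 2 ≤
      (1 + α⁻¹) * ((1 / n : ℝ) * ∑ j, ‖b j‖ ^ 2)
        + (1 + α) * ((1 / n : ℝ) * ∑ j, ‖a j‖ ^ 2) - α * ‖A‖ ^ 2 := by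
  have hn' : (0 : ℝ) < n := by exact_mod_cast hn
  have key := Finset.sum_le_sum (s := Finset.univ)
    (fun j _ => saga_pointwise (a j) (b j) A B α hα)
  simp only [Finset.sum_add_distrib, Finset.sum_sub_distrib, ← Finset.mul_sum, ← sum_inner,
    hA, hB, real_inner_smul_left, real_inner_self_eq_norm_sq, Finset.sum_const,
    Finset.card_univ, Fintype.card_fin, nsmul_eq_mul, ← Nat.cast_smul_eq_nsmul ℝ, smul_eq_mul] at key
  have h0 : 0 ≤ (1 + α⁻¹) * ‖B‖ ^ 2 := by positivity
  have k2 := mul_le_mul_of_nonneg_left key (by positivity : (0 : ℝ) ≤ 1 / n)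
  refine k2.trans ?_
  have hc : (1 / n : ℝ) * n = 1 := by field_simp
  generalize (1 / n : ℝ) = c at *
  linear_combination h0 + (-(1 + α⁻¹) * ‖B‖ ^ 2 - α * ‖A‖ ^ 2) * hc

/-- (Third auxiliary lemma for A-SAGA.) With
`X_j = ∇g_j(w) − ∇g_j(φ_j) + (1/n)·Σ_i ∇g_i(φ_i) − ∇g(w_*)`, the uniform average over
`j` satisfies `(1/n)·Σ_j X_j = ∇g(w) − ∇g(w_*)`, and
`(1/n)·Σ_j ‖X_j‖² ≤ (1+α⁻¹)·(1/n)·Σ_j ‖∇g_j(φ_j)−∇g_j(w_*)‖²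
  + (1+α)·(1/n)·Σ_j ‖∇g_j(w)−∇g_j(w_*)‖² − α·‖∇g(w)−∇g(w_*)‖²`. -/
theorem saga_variance_bound {D n : ℕ} (hn : 0 < n)
    (g : Fin n → EuclideanSpace ℝ (Fin D) → ℝ)
    (g' : Fin n → EuclideanSpace ℝ (Fin D) → EuclideanSpace ℝ (Fin D))
    (hdiff : ∀ i w, HasGradientAt (g i) (g' i w) w)
    (G : EuclideanSpace ℝ (Fin D) → ℝ)
    (G' : EuclideanSpace ℝ (Fin D) → EuclideanSpace ℝ (Fin D))
    (hG : ∀ w, G w = (1 / n : ℝ) * ∑ i, g i w)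
    (hG' : ∀ w, HasGradientAt G (G' w) w)
    (φ : Fin n → EuclideanSpace ℝ (Fin D))
    (w wstar : EuclideanSpace ℝ (Fin D))
    (α : ℝ) (hα : 0 < α)
    (X : Fin n → EuclideanSpace ℝ (Fin D))
    (hX : ∀ j, X j = g' j w - g' j (φ j)
      + (1 / n : ℝ) • ∑ i, g' i (φ i) - G' wstar) :
    (1 / n : ℝ) • ∑ j, X j = G' w - G' wstar ∧
    (1 / n : ℝ) * ∑ j, ‖X j‖ ^ 2 ≤
      (1 + α⁻¹) * ((1 / n : ℝ) * ∑ j, ‖g' j (φ j) - g' j wstar‖ ^ 2)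
        + (1 + α) * ((1 / n : ℝ) * ∑ j, ‖g' j w - g' j wstar‖ ^ 2)
        - α * ‖G' w - G' wstar‖ ^ 2 := by
  have hn' : (n : ℝ) ≠ 0 := by exact_mod_cast hn.ne'
  have hgrad : ∀ v, G' v = (1 / n : ℝ) • ∑ i, g' i v := by
    intro v
    have hGe : G = fun v => (1 / n : ℝ) * ∑ i, g i v := funext hG
    have h1 : HasGradientAt G ((1 / n : ℝ) • ∑ i, g' i v) v := by
      rw [hasGradientAt_iff_hasFDerivAt, hGe, map_smul, map_sum]
      exact (HasFDerivAt.fun_sum fun i _ => (hdiff i v).hasFDerivAt).const_mul _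
    exact (hG' v).unique h1
  have hs : ∀ v : EuclideanSpace ℝ (Fin D), (n : ℝ) • (1 / n : ℝ) • v = v := by
    intro v; rw [smul_smul, mul_one_div_cancel hn', one_smul]
  have hA : ∑ j, (g' j w - g' j wstar) = (n : ℝ) • (G' w - G' wstar) := by
    rw [hgrad, hgrad, smul_sub, hs, hs, Finset.sum_sub_distrib]
  have hB : ∑ j, (g' j (φ j) - g' j wstar)
      = (n : ℝ) • ((1 / n : ℝ) • ∑ i, g' i (φ i) - G' wstar) := by
    rw [hgrad, smul_sub, hs, hs, Finset.sum_sub_distrib]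
  have hXe : ∀ j, X j = (g' j w - g' j wstar) - (g' j (φ j) - g' j wstar)
      + ((1 / n : ℝ) • ∑ i, g' i (φ i) - G' wstar) := by
    intro j; rw [hX]; abel
  refine ⟨?_, ?_⟩
  · simp only [hXe]
    rw [Finset.sum_add_distrib, Finset.sum_sub_distrib, hA, hB, Finset.sum_const,
      Finset.card_univ, Fintype.card_fin, ← Nat.cast_smul_eq_nsmul ℝ, sub_add_cancel,
      smul_smul, one_div_mul_cancel hn', one_smul]
  · simp only [hXe]
    exact saga_average hn _ _ _ _ α hα hA hB
end

section
/- Let W ⊆ ℝ^D be a nonempty closed convex set, 0 < μ ≤ L, and let g_1,…,g_n : ℝ^D → ℝ be differentiable, each μ-strongly convex with L-Lipschitz continuous gradient; set g = (1/n)·Σ_i g_i and let w_* be the minimizer of g over W. Fix w^t ∈ W and memory points φ_1^t,…,φ_n^t ∈ ℝ^D, and let Θ_1,…,Θ_n ∈ ℝ^D be error vectors each of whose components has absolute value at most θ, where θ > 0 satisfies θ ≤ min{ 1/√D , μ·‖w^t − w_*‖² / (2√D·(5/(18L) + 2‖w^t − w_*‖)) }. Set α = 8, γ = 1/((1+α)·(1+θ√D)·L),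 c = 2/(n·γ), and 1/τ = min{1/(2n), γμ/2}. For each j ∈ {1,…,n}, let φ^{t+1,j} be the tuple obtained from (φ_1^t,…,φ_n^t) by replacing the j-th entry with w^t, let v^{t+1,j} = w^t − γ·[∇g_j(w^t) − ∇g_j(φ_j^t) + (1/n)·Σ_{i=1}^n ∇g_i(φ_i^t)] + γ·Θ_j, and let w^{t+1,j} = Π_W(v^{t+1,j}) be the metric projection of v^{t+1,j} onto W. Define the Lyapunov function T(w, φ) = (1/n)·Σ_i g_i(φ_i) − g(w_*) − (1/n)·Σ_i ⟨∇g_i(w_*), φ_i − w_*⟩ + c·‖w − w_*‖². Then (1/n)·Σ_{j=1}^n T(w^{t+1,j}, φ^{t+1,j}) ≤ (1 − 1/τ)·T(w^t, (φ_1^t,…,φ_n^t)). -/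
open scoped RealInnerProductSpace

set_option maxHeartbeats 2000000

set_option linter.unusedSectionVars false

section Aux

variable {E : Type*} [NormedAddCommGroup E] [InnerProductSpace ℝ E]

lemma aux_small {a b : ℝ} (h : ∀ t : ℝ, 0 < t → t ≤ 1 → 0 ≤ t * a + t ^ 2 * b) : 0 ≤ a := by
  by_contra hc
  push Not at hc
  have hB : 0 < |b| + |a| + 1 := by positivity
  have ha : |a| = -a := abs_of_neg hc
  have ht : 0 < |a| / (|b| + |a| + 1) := by
    rw [ha]; apply div_pos; linarith; rw [← ha]; exact hB
  have h1 : |a| / (|b| + |a| + 1) ≤ 1 := by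
    rw [div_le_one hB]; linarith [abs_nonneg b]
  have h2 := h _ ht h1
  have h3 : 0 ≤ a + |a| / (|b| + |a| + 1) * b := by
    by_contra h4
    push Not at h4
    nlinarith [mul_neg_of_pos_of_neg ht h4]
  have h4 : |a| / (|b| + |a| + 1) * b < |a| := by
    rw [div_mul_eq_mul_div, div_lt_iff₀ hB]
    nlinarith [le_abs_self b, abs_nonneg a, abs_nonneg b]
  linarith

/-- Descent lemma. -/
lemma aux_descent [CompleteSpace E] {f : E → ℝ} {f' : E → E} {L : ℝ}
    (hd : ∀ w, HasGradientAt f (f' w) w)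
    (hl : ∀ u v, ‖f' u - f' v‖ ≤ L * ‖u - v‖) (u v : E) :
    f u ≤ f v + ⟪f' v, u - v⟫ + L / 2 * ‖u - v‖ ^ 2 := by
  let h : ℝ → ℝ := fun t =>
    f (v + t • (u - v)) - t * ⟪f' v, u - v⟫ - L / 2 * t ^ 2 * ‖u - v‖ ^ 2
  have hder : ∀ t : ℝ, HasDerivAt h
      (⟪f' (v + t • (u - v)), u - v⟫ - ⟪f' v, u - v⟫ - L * t * ‖u - v‖ ^ 2) t := by
    intro t
    have h1 : HasDerivAt (fun t : ℝ => v + t • (u - v)) (u - v) t := by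
      simpa using ((hasDerivAt_id t).smul_const (u - v)).const_add v
    have h2 := (hd (v + t • (u - v))).hasFDerivAt.comp_hasDerivAt t h1
    have h3 : HasDerivAt (fun t : ℝ => t * ⟪f' v, u - v⟫) ⟪f' v, u - v⟫ t := by
      simpa using (hasDerivAt_id t).mul_const (⟪f' v, u - v⟫ : ℝ)
    have h4 : HasDerivAt (fun t : ℝ => L / 2 * t ^ 2 * ‖u - v‖ ^ 2)
        (L * t * ‖u - v‖ ^ 2) t := by
      have := (((hasDerivAt_id t).fun_pow 2).const_mul (L / 2)).mul_const (‖u - v‖ ^ 2)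
      refine (this.congr_deriv ?_)
      simp only [id, Nat.add_one_sub_one, pow_one, Nat.cast_ofNat, mul_one]
      ring
    have := (h2.sub h3).sub h4
    refine HasDerivAt.congr_deriv (f := h) this ?_
    simp
  have hanti : AntitoneOn h (Set.Icc 0 1) := by
    apply antitoneOn_of_deriv_nonpos (convex_Icc 0 1)
    · exact fun t _ => (hder t).continuousAt.continuousWithinAt
    · exact fun t _ => (hder t).differentiableAt.differentiableWithinAt
    · intro t ht
      rw [interior_Icc] at ht
      rw [(hder t).deriv, ← inner_sub_left]
      have h1 := real_inner_le_norm (f' (v + t • (u - v)) - f' v) (u - v)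
      have h2 := hl (v + t • (u - v)) v
      have h3 : ‖v + t • (u - v) - v‖ = t * ‖u - v‖ := by
        rw [add_sub_cancel_left, norm_smul, Real.norm_eq_abs, abs_of_pos ht.1]
      rw [h3] at h2
      nlinarith [norm_nonneg (u - v)]
  have := hanti (show (0 : ℝ) ∈ Set.Icc (0 : ℝ) 1 by simp)
    (show (1 : ℝ) ∈ Set.Icc (0 : ℝ) 1 by simp) zero_le_one
  simp [h] at this
  linarith

/-- Bregman divergence dominates gradient difference. -/
lemma aux_breg {f : E → ℝ} {f' : E → E} {L : ℝ} (hL : 0 < L)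
    (hc : ∀ u v, f v + ⟪f' v, u - v⟫ ≤ f u)
    (hu : ∀ u v, f u ≤ f v + ⟪f' v, u - v⟫ + L / 2 * ‖u - v‖ ^ 2) (u v : E) :
    ‖f' u - f' v‖ ^ 2 ≤ 2 * L * (f u - f v - ⟪f' v, u - v⟫) := by
  have h1 := hc (u - (1 / L) • (f' u - f' v)) v
  have h2 := hu (u - (1 / L) • (f' u - f' v)) u
  have e1 : u - (1 / L) • (f' u - f' v) - v = (u - v) - (1 / L) • (f' u - f' v) := by abel
  have e2 : u - (1 / L) • (f' u - f' v) - u = - ((1 / L) • (f' u - f' v)) := by abel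
  rw [e1, inner_sub_right, inner_smul_right] at h1
  rw [e2, inner_neg_right, inner_smul_right, norm_neg, norm_smul, mul_pow] at h2
  have e3 : ⟪f' u, f' u - f' v⟫ - ⟪f' v, f' u - f' v⟫ = ‖f' u - f' v‖ ^ 2 := by
    rw [← inner_sub_left, real_inner_self_eq_norm_sq]
  have e4 : L / 2 * (‖1 / L‖ ^ 2 * ‖f' u - f' v‖ ^ 2) = 1 / (2 * L) * ‖f' u - f' v‖ ^ 2 := by
    rw [Real.norm_eq_abs, sq_abs]; field_simp
  rw [e4] at h2
  have e5 : 1 / L * (⟪f' u, f' u - f' v⟫ - ⟪f' v, f' u - f' v⟫) = 2 * (1 / (2 * L) * ‖f' u - f' v‖ ^ 2) := by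
    rw [e3]; field_simp
  have h3 : 1 / (2 * L) * ‖f' u - f' v‖ ^ 2 ≤ f u - f v - ⟪f' v, u - v⟫ := by linarith
  have h4 := mul_le_mul_of_nonneg_left h3 (show 0 ≤ 2 * L by linarith)
  have e6 : 2 * L * (1 / (2 * L) * ‖f' u - f' v‖ ^ 2) = ‖f' u - f' v‖ ^ 2 := by field_simp
  linarith

/-- Strong coercivity. -/
lemma aux_coer {f : E → ℝ} {f' : E → E} {μ L : ℝ} (hμL : μ ≤ L)
    (hc : ∀ u v, f u ≥ f v + ⟪f' v, u - v⟫ + μ / 2 * ‖u - v‖ ^ 2)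
    (hu : ∀ u v, f u ≤ f v + ⟪f' v, u - v⟫ + L / 2 * ‖u - v‖ ^ 2) (u v : E) :
    ‖f' u - f' v‖ ^ 2 + μ * L * ‖u - v‖ ^ 2 ≤ (L + μ) * ⟪f' u - f' v, u - v⟫ := by
  have hM : μ * ‖u - v‖ ^ 2 ≤ ⟪f' u - f' v, u - v⟫ := by
    have h1 := hc u v
    have h2 := hc v u
    rw [← neg_sub u v, inner_neg_right, norm_neg] at h2
    rw [inner_sub_left]; linarith
  have key : ∀ ε : ℝ, 0 < ε → ‖f' u - f' v‖ ^ 2 + μ * L * ‖u - v‖ ^ 2 ≤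
      (L + μ) * ⟪f' u - f' v, u - v⟫ + ε * (⟪f' u - f' v, u - v⟫ - μ * ‖u - v‖ ^ 2) := by
    intro ε hε
    let h : E → ℝ := fun w => f w - μ / 2 * ‖w‖ ^ 2
    let h' : E → E := fun w => f' w - μ • w
    have hl : 0 < L - μ + ε := by linarith
    have id1 : ∀ a b : E, h a - h b - ⟪h' b, a - b⟫ =
        f a - f b - ⟪f' b, a - b⟫ - μ / 2 * ‖a - b‖ ^ 2 := by
      intro a b
      simp only [h, h', inner_sub_left, inner_smul_left, norm_sub_sq_real, inner_sub_right]
      simp only [real_inner_self_eq_norm_sq, real_inner_comm a b]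
      simp; ring
    have hc' : ∀ a b, h b + ⟪h' b, a - b⟫ ≤ h a := by
      intro a b; have := id1 a b; have := hc a b; linarith
    have hu' : ∀ a b, h a ≤ h b + ⟪h' b, a - b⟫ + (L - μ + ε) / 2 * ‖a - b‖ ^ 2 := by
      intro a b; have := id1 a b; have := hu a b
      nlinarith [sq_nonneg ‖a - b‖]
    have h1 := aux_breg hl hc' hu' u v
    have h2 := aux_breg hl hc' hu' v u
    have e2 : ‖h' v - h' u‖ = ‖h' u - h' v‖ := norm_sub_rev _ _
    rw [e2] at h2
    have e3 : h u - h v - ⟪h' v, u - v⟫ + (h v - h u - ⟪h' u, v - u⟫)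
        = ⟪f' u - f' v, u - v⟫ - μ * ‖u - v‖ ^ 2 := by
      rw [id1, id1, ← neg_sub u v, inner_neg_right, norm_neg, inner_sub_left]; ring
    have e4 : ‖h' u - h' v‖ ^ 2 = ‖f' u - f' v‖ ^ 2 - 2 * μ * ⟪f' u - f' v, u - v⟫
        + μ ^ 2 * ‖u - v‖ ^ 2 := by
      have : h' u - h' v = (f' u - f' v) - μ • (u - v) := by
        simp only [h', smul_sub]; abel
      rw [this, norm_sub_sq_real, inner_smul_right, norm_smul, mul_pow, Real.norm_eq_abs, sq_abs]
      ring
    have h3 : ‖h' u - h' v‖ ^ 2 ≤ (L - μ + ε) * (⟪f' u - f' v, u - v⟫ - μ * ‖u - v‖ ^ 2) := by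
      rw [← e3]; linarith
    rw [e4] at h3
    linarith
  refine le_of_forall_pos_le_add fun η hη => ?_
  have hp : 0 ≤ ⟪f' u - f' v, u - v⟫ - μ * ‖u - v‖ ^ 2 := by linarith
  have := key (η / (⟪f' u - f' v, u - v⟫ - μ * ‖u - v‖ ^ 2 + 1)) (by positivity)
  have h2 : η / (⟪f' u - f' v, u - v⟫ - μ * ‖u - v‖ ^ 2 + 1)
      * (⟪f' u - f' v, u - v⟫ - μ * ‖u - v‖ ^ 2) ≤ η := by
    rw [div_mul_eq_mul_div, div_le_iff₀ (by linarith)]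
    nlinarith
  linarith

/-- Variance identity. -/
lemma aux_var {n : ℕ} (a : Fin n → E) (m : E) (hm : ∑ j, a j = (n : ℝ) • m) :
    ∑ j, ‖a j - m‖ ^ 2 = ∑ j, ‖a j‖ ^ 2 - n * ‖m‖ ^ 2 := by
  simp only [norm_sub_sq_real, Finset.sum_add_distrib, Finset.sum_sub_distrib,
    ← Finset.mul_sum, ← sum_inner, hm, inner_smul_left]
  simp
  ring

lemma aux_young (a b : E) : ‖a - b‖ ^ 2 ≤ 9 * ‖a‖ ^ 2 + 9 / 8 * ‖b‖ ^ 2 := by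
  have h := norm_sub_le a b
  have h0 := norm_nonneg (a - b)
  nlinarith [sq_nonneg (8 * ‖a‖ - ‖b‖), norm_nonneg a, norm_nonneg b]

/-- SAGA variance bound. -/
lemma aux_saga {n : ℕ} (a b : Fin n → E) (ma mb : E) (ha : ∑ j, a j = (n : ℝ) • ma)
    (hb : ∑ j, b j = (n : ℝ) • mb) :
    ∑ j, ‖a j - b j + mb‖ ^ 2 ≤
      9 * ∑ j, ‖a j‖ ^ 2 + 9 / 8 * ∑ j, ‖b j‖ ^ 2 - 8 * n * ‖ma‖ ^ 2 := by
  have h1 := aux_var (fun j => a j - b j + mb) ma (by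
    simp [Finset.sum_add_distrib, Finset.sum_sub_distrib, ha, hb, Nat.cast_smul_eq_nsmul])
  have h2 := aux_var a ma ha
  have h3 := aux_var b mb hb
  have h4 : ∑ j, ‖a j - b j + mb - ma‖ ^ 2 ≤
      ∑ j, (9 * ‖a j - ma‖ ^ 2 + 9 / 8 * ‖b j - mb‖ ^ 2) := by
    apply Finset.sum_le_sum
    intro j _
    have := aux_young (a j - ma) (b j - mb)
    have e : a j - ma - (b j - mb) = a j - b j + mb - ma := by abel
    rwa [e] at this
  rw [Finset.sum_add_distrib, ← Finset.mul_sum, ← Finset.mul_sum, h2, h3] at h4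
  have h5 : 0 ≤ (n : ℝ) * ‖mb‖ ^ 2 := by positivity
  linarith

/-- Projection step. -/
lemma aux_proj {W : Set E} (hW : Convex ℝ W) {v p s z : E} (hp : p ∈ W) (hs : s ∈ W)
    (hmin : ∀ u ∈ W, ‖v - p‖ ≤ ‖v - u‖) (hz : ∀ w ∈ W, 0 ≤ ⟪z, w - s⟫) :
    ‖p - s‖ ^ 2 ≤ ‖v - s + z‖ ^ 2 := by
  have h1 : 0 ≤ -2 * ⟪v - p, s - p⟫ := by
    apply aux_small (b := ‖s - p‖ ^ 2)
    intro t ht0 ht1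
    have hm := hW.add_smul_sub_mem hp hs ⟨ht0.le, ht1⟩
    have h2 := hmin _ hm
    have e : v - (p + t • (s - p)) = (v - p) - t • (s - p) := by abel
    rw [e] at h2
    have h3 := pow_le_pow_left₀ (norm_nonneg _) h2 2
    rw [norm_sub_sq_real (v - p), inner_smul_right, norm_smul, mul_pow, Real.norm_eq_abs, sq_abs] at h3
    linarith
  have h2 := hz p hp
  have e : v - p = (v - s + z) - (p - s) - z := by abel
  have e2 : s - p = -(p - s) := by abel
  rw [e, e2, inner_neg_right, inner_sub_left, inner_sub_left, real_inner_self_eq_norm_sq] at h1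
  have h3 := real_inner_le_norm (v - s + z) (p - s)
  have h4 : ‖p - s‖ ^ 2 ≤ ‖v - s + z‖ * ‖p - s‖ := by linarith
  nlinarith [sq_nonneg (‖v - s + z‖ - ‖p - s‖)]

lemma aux_err (X T : E) {q : ℝ} (hT : ‖T‖ ≤ q) :
    ‖X - T‖ ^ 2 ≤ (1 + q) * ‖X‖ ^ 2 + q + q ^ 2 := by
  have h := norm_sub_le X T
  have h0 := norm_nonneg (X - T)
  have hq : 0 ≤ q := (norm_nonneg T).trans hT
  have h1 : ‖X - T‖ ≤ ‖X‖ + q := by linarith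
  nlinarith [mul_nonneg hq (sq_nonneg (‖X‖ - 1)), norm_nonneg X]

lemma aux_norm {D : ℕ} {θ : ℝ} (hθ : 0 ≤ θ) (x : EuclideanSpace ℝ (Fin D))
    (h : ∀ k, |x k| ≤ θ) : ‖x‖ ≤ θ * Real.sqrt D := by
  rw [EuclideanSpace.norm_eq]
  apply Real.sqrt_le_iff.2
  refine ⟨by positivity, ?_⟩
  rw [mul_pow, Real.sq_sqrt (Nat.cast_nonneg _)]
  calc ∑ i, ‖x i‖ ^ 2 ≤ ∑ _i : Fin D, θ ^ 2 :=
        Finset.sum_le_sum fun i _ => pow_le_pow_left₀ (norm_nonneg _) (by simpa using h i) 2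
    _ = θ ^ 2 * D := by simp [mul_comm]

lemma aux_scalar {N L μ q γ d ρ SH SK SM SA SB SX SP Z : ℝ} (hN : 0 < N) (hL : 0 < L)
    (hμ : 0 < μ) (hμL : μ ≤ L) (hq : 0 ≤ q) (hγ0 : 0 < γ) (hγ : γ * (1 + q) * L = 1 / 9)
    (hqd : q * (4 * d + 5 / (9 * L)) ≤ μ * d ^ 2)
    (hρ1 : ρ * N ≤ 1 / 2) (hρ2 : ρ ≤ γ * μ / 2)
    (hSH : 0 ≤ SH) (hSM : 0 ≤ SM) (hSK : SK ≤ SM - N * (μ / 2 * d ^ 2))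
    (hSA : SA + N * (μ * L * d ^ 2) ≤ (L + μ) * SM) (hSB : SB ≤ 2 * L * SH)
    (hZ : μ * SM ≤ Z) (hSX : SX ≤ 9 * SA + 9 / 8 * SB - 8 * Z)
    (hSP : SP ≤ N * d ^ 2 - 2 * γ * SM + 2 * γ * (N * (q * d)) +
      γ ^ 2 * ((1 + q) * SX + N * (q + q ^ 2))) :
    (1 / N) * ((1 / N) * (N * SH - SH + SK) + 2 / (N * γ) * SP) ≤
      (1 - ρ) * ((1 / N) * SH + 2 / (N * γ) * d ^ 2) := by
  have hq2 : q * (1 / (9 * L)) * 2 ≤ μ * d ^ 2 - q * (4 * d) := by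
    have : q * (5 / (9 * L)) = 5 * (q * (1 / (9 * L))) := by ring
    have h0 : 0 ≤ q * (1 / (9 * L)) := by positivity
    linarith
  have hγq : γ * (1 + q) = 1 / (9 * L) := by
    field_simp; linarith
  have hA : 2 / γ * (SP - N * d ^ 2) ≤
      -4 * SM + 4 * (N * (q * d)) + 2 * (1 / (9 * L)) * (SX + N * q) := by
    rw [← hγq, div_mul_eq_mul_div, div_le_iff₀ hγ0]
    nlinarith
  have hB : ρ * N * SH ≤ 1 / 2 * SH := mul_le_mul_of_nonneg_right hρ1 hSH
  have hC : ρ * (2 * N / γ) * d ^ 2 ≤ N * (μ * d ^ 2) := by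
    have h1 : ρ * (2 * N / γ) ≤ N * μ := by
      rw [mul_div_assoc', div_le_iff₀ hγ0]; nlinarith
    nlinarith [mul_le_mul_of_nonneg_right h1 (sq_nonneg d)]
  have hX : 2 * (1 / (9 * L)) * SX ≤ 2 * SM + 1 / 2 * SH - 2 * N * (μ * d ^ 2) + SM := by
    have : 2 * (1 / (9 * L)) * SX = 2 * SX / (9 * L) := by ring
    rw [this, div_le_iff₀ (by positivity)]
    nlinarith [mul_le_mul_of_nonneg_right hμL hSM]
  have hq3 := mul_le_mul_of_nonneg_left hq2 hN.le
  have hd : 0 ≤ N * (μ * d ^ 2) := by positivity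
  have key : -SH + SK + 2 / γ * (SP - N * d ^ 2) + ρ * N * SH + ρ * (2 * N / γ) * d ^ 2 ≤ 0 := by
    nlinarith
  have e : (1 / N) * ((1 / N) * (N * SH - SH + SK) + 2 / (N * γ) * SP) -
      (1 - ρ) * ((1 / N) * SH + 2 / (N * γ) * d ^ 2) = 1 / N ^ 2 *
      (-SH + SK + 2 / γ * (SP - N * d ^ 2) + ρ * N * SH + ρ * (2 * N / γ) * d ^ 2) := by
    field_simp; ring
  have h2 : 0 ≤ 1 / N ^ 2 := by positivity
  have := mul_nonpos_of_nonneg_of_nonpos h2 key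
  linarith

end Aux


/-- One-step contraction of the Lyapunov function for A-SAGA
(SAGA with additive gradient errors). Averaging the Lyapunov value over the uniformly
random index `j` chosen at the iteration gives
`(1/n)·Σ_j T(w^{t+1,j}, φ^{t+1,j}) ≤ (1 − 1/τ)·T(w^t, φ^t)`. -/
theorem asaga_one_step_contraction {D n : ℕ} (hn : 0 < n) (μ L : ℝ)
    (hμ : 0 < μ) (hμL : μ ≤ L)
    (W : Set (EuclideanSpace ℝ (Fin D)))
    (hWne : W.Nonempty) (hWcl : IsClosed W) (hWconv : Convex ℝ W)
    (g : Fin n → EuclideanSpace ℝ (Fin D) → ℝ)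
    (g' : Fin n → EuclideanSpace ℝ (Fin D) → EuclideanSpace ℝ (Fin D))
    (hdiff : ∀ i w, HasGradientAt (g i) (g' i w) w)
    (hsc : ∀ i, ∀ u v : EuclideanSpace ℝ (Fin D),
      g i u ≥ g i v + ⟪g' i v, u - v⟫ + (μ / 2) * ‖u - v‖ ^ 2)
    (hlip : ∀ i, ∀ u v : EuclideanSpace ℝ (Fin D),
      ‖g' i u - g' i v‖ ≤ L * ‖u - v‖)
    (G : EuclideanSpace ℝ (Fin D) → ℝ)
    (hG : ∀ w, G w = (1 / n : ℝ) * ∑ i, g i w)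
    -- `w_*` minimizes `g` over `W`
    (wstar : EuclideanSpace ℝ (Fin D)) (hwstarW : wstar ∈ W)
    (hwstar : ∀ w ∈ W, G wstar ≤ G w)
    -- `Π_W` is the metric (nearest-point) projection onto `W`
    (proj : EuclideanSpace ℝ (Fin D) → EuclideanSpace ℝ (Fin D))
    (hproj : ∀ v, proj v ∈ W ∧ ∀ u ∈ W, ‖v - proj v‖ ≤ ‖v - u‖)
    -- current iterate and memory points
    (wt : EuclideanSpace ℝ (Fin D)) (hwt : wt ∈ W)
    (φ : Fin n → EuclideanSpace ℝ (Fin D))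
    -- gradient-error vectors, each component bounded by `θ`
    (θ : ℝ) (hθpos : 0 < θ)
    (hθ : θ ≤ min (1 / Real.sqrt D)
      (μ * ‖wt - wstar‖ ^ 2 /
        (2 * Real.sqrt D * (5 / (18 * L) + 2 * ‖wt - wstar‖))))
    (Θ : Fin n → EuclideanSpace ℝ (Fin D))
    (hΘ : ∀ j, ∀ k : Fin D, |Θ j k| ≤ θ)
    -- the parameters of A-SAGA
    (α γ c τ : ℝ)
    (hα : α = 8)
    (hγ : γ = 1 / ((1 + α) * (1 + θ * Real.sqrt D) * L))
    (hc : c = 2 / (n * γ))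
    (hτ : 1 / τ = min (1 / (2 * (n : ℝ))) (γ * μ / 2))
    -- the Lyapunov function
    (T : EuclideanSpace ℝ (Fin D) → (Fin n → EuclideanSpace ℝ (Fin D)) → ℝ)
    (hT : ∀ w φ', T w φ' =
      (1 / n : ℝ) * ∑ i, g i (φ' i) - G wstar
        - (1 / n : ℝ) * ∑ i, ⟪g' i wstar, φ' i - wstar⟫
        + c * ‖w - wstar‖ ^ 2)
    -- the update produced when index `j` is sampled
    (φ' : Fin n → Fin n → EuclideanSpace ℝ (Fin D))
    (hφ' : ∀ j, φ' j = Function.update φ j wt)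
    (v' : Fin n → EuclideanSpace ℝ (Fin D))
    (hv' : ∀ j, v' j = wt
      - γ • (g' j wt - g' j (φ j) + (1 / n : ℝ) • ∑ i, g' i (φ i))
      + γ • Θ j)
    (w' : Fin n → EuclideanSpace ℝ (Fin D))
    (hw' : ∀ j, w' j = proj (v' j)) :
    (1 / n : ℝ) * ∑ j, T (w' j) (φ' j) ≤ (1 - 1 / τ) * T wt φ := by
  classical
  have hN : (0 : ℝ) < n := by exact_mod_cast hn
  have hL : 0 < L := lt_of_lt_of_le hμ hμL
  have hθ1 := le_trans hθ (min_le_right _ _)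
  have hD : 0 < Real.sqrt D := by
    rcases (Real.sqrt_nonneg (D : ℝ)).eq_or_lt with h | h
    · rw [← h] at hθ1; simp at hθ1; linarith
    · exact h
  set q : ℝ := θ * Real.sqrt D with hqdef
  set d : ℝ := ‖wt - wstar‖ with hddef
  have hd0 : 0 ≤ d := norm_nonneg _
  have hd : 0 < d := by
    rcases hd0.eq_or_lt with h | h
    · rw [← h] at hθ1; simp at hθ1; linarith
    · exact h
  have hq : 0 ≤ q := by positivity
  have hqd : q * (4 * d + 5 / (9 * L)) ≤ μ * d ^ 2 := by
    rw [le_div_iff₀ (by positivity)] at hθ1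
    have : θ * (2 * Real.sqrt D * (5 / (18 * L) + 2 * d)) = q * (4 * d + 5 / (9 * L)) := by
      rw [hqdef]; field_simp; ring
    linarith
  have hγ0 : 0 < γ := by rw [hγ, hα]; positivity
  have hγ1 : γ * (1 + q) * L = 1 / 9 := by
    rw [hγ, hα]; field_simp; norm_num
  have hdesc : ∀ i u v, g i u ≤ g i v + ⟪g' i v, u - v⟫ + L / 2 * ‖u - v‖ ^ 2 :=
    fun i => aux_descent (hdiff i) (hlip i)
  -- Bregman divergences
  let B : Fin n → EuclideanSpace ℝ (Fin D) → ℝ :=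
    fun i y => g i y - g i wstar - ⟪g' i wstar, y - wstar⟫
  have hB0 : ∀ i y, 0 ≤ B i y := by
    intro i y
    have := hsc i y wstar
    have h2 : 0 ≤ μ / 2 * ‖y - wstar‖ ^ 2 := by positivity
    simp only [B]; linarith
  have hBL : ∀ i y, ‖g' i y - g' i wstar‖ ^ 2 ≤ 2 * L * B i y := by
    intro i y
    refine aux_breg hL (fun u v => ?_) (hdesc i) y wstar
    have := hsc i u v
    have h2 : 0 ≤ μ / 2 * ‖u - v‖ ^ 2 := by positivity
    linarith
  have hT' : ∀ w ψ, T w ψ = (1 / n : ℝ) * ∑ i, B i (ψ i) + c * ‖w - wstar‖ ^ 2 := by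
    intro w ψ
    rw [hT, hG]; simp only [B, Finset.sum_sub_distrib]; ring
  -- gradient differences
  let a : Fin n → EuclideanSpace ℝ (Fin D) := fun j => g' j wt - g' j wstar
  let b : Fin n → EuclideanSpace ℝ (Fin D) := fun j => g' j (φ j) - g' j wstar
  let ma : EuclideanSpace ℝ (Fin D) := (1 / n : ℝ) • ∑ j, a j
  let mb : EuclideanSpace ℝ (Fin D) := (1 / n : ℝ) • ∑ j, b j
  let m : EuclideanSpace ℝ (Fin D) := (1 / n : ℝ) • ∑ j, g' j wstar
  have hma : ∑ j, a j = (n : ℝ) • ma := by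
    simp only [ma, smul_smul]; rw [mul_one_div_cancel hN.ne', one_smul]
  have hmb : ∑ j, b j = (n : ℝ) • mb := by
    simp only [mb, smul_smul]; rw [mul_one_div_cancel hN.ne', one_smul]
  have hmbm : (1 / n : ℝ) • ∑ i, g' i (φ i) = mb + m := by
    simp only [mb, m, b, Finset.sum_sub_distrib, smul_sub]; abel
  -- first-order optimality
  have hopt : ∀ w ∈ W, 0 ≤ ⟪m, w - wstar⟫ := by
    intro w hw
    apply aux_small (b := L / 2 * ‖w - wstar‖ ^ 2)
    intro t ht0 ht1
    have h1 := hwstar _ (hWconv.add_smul_sub_mem hwstarW hw ⟨ht0.le, ht1⟩)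
    rw [hG, hG] at h1
    have h2 : ∑ i, g i (wstar + t • (w - wstar)) ≤
        ∑ i, (g i wstar + t * ⟪g' i wstar, w - wstar⟫
          + t ^ 2 * (L / 2 * ‖w - wstar‖ ^ 2)) := by
      apply Finset.sum_le_sum
      intro i _
      have := hdesc i (wstar + t • (w - wstar)) wstar
      rw [add_sub_cancel_left, inner_smul_right, norm_smul, mul_pow, Real.norm_eq_abs,
        sq_abs] at this
      linarith
    rw [Finset.sum_add_distrib, Finset.sum_add_distrib, ← Finset.mul_sum, Finset.sum_const,
      Finset.card_univ, Fintype.card_fin, nsmul_eq_mul] at h2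
    have h3 : ⟪m, w - wstar⟫ = (1 / n : ℝ) * ∑ i, ⟪g' i wstar, w - wstar⟫ := by
      simp only [m, real_inner_smul_left, sum_inner]
    rw [h3]
    have h4 := mul_le_mul_of_nonneg_left h2 (show (0 : ℝ) ≤ 1 / n by positivity)
    have h5 : (1 / n : ℝ) * (n * (t ^ 2 * (L / 2 * ‖w - wstar‖ ^ 2))) =
      t ^ 2 * (L / 2 * ‖w - wstar‖ ^ 2) := by field_simp
    nlinarith
  have hoptγ : ∀ w ∈ W, 0 ≤ ⟪γ • m, w - wstar⟫ := by
    intro w hw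
    rw [real_inner_smul_left]
    exact mul_nonneg hγ0.le (hopt w hw)
  have hΘq : ∀ j, ‖Θ j‖ ≤ q := fun j => aux_norm hθpos.le (Θ j) (hΘ j)
  -- distance bound
  have hdist : ∀ j, ‖w' j - wstar‖ ^ 2 ≤ d ^ 2 - 2 * γ * ⟪a j - b j + mb, wt - wstar⟫
      + 2 * γ * (q * d) + γ ^ 2 * ((1 + q) * ‖a j - b j + mb‖ ^ 2 + (q + q ^ 2)) := by
    intro j
    have h1 : ‖w' j - wstar‖ ^ 2 ≤ ‖v' j - wstar + γ • m‖ ^ 2 := by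
      rw [hw']
      exact aux_proj hWconv (hproj _).1 hwstarW (hproj _).2 hoptγ
    have e : v' j - wstar + γ • m = (wt - wstar) - γ • ((a j - b j + mb) - Θ j) := by
      rw [hv', hmbm]; simp only [a, b]; module
    rw [e, norm_sub_sq_real (wt - wstar), real_inner_smul_right, norm_smul, mul_pow,
      Real.norm_eq_abs, sq_abs, real_inner_comm, inner_sub_left] at h1
    have h2 := aux_err (a j - b j + mb) (Θ j) (hΘq j)
    have h3 : ⟪Θ j, wt - wstar⟫ ≤ q * d :=
      (real_inner_le_norm _ _).trans (mul_le_mul_of_nonneg_right (hΘq j) hd0)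
    have h4 := mul_le_mul_of_nonneg_left h2 (sq_nonneg γ)
    have h5 := mul_le_mul_of_nonneg_left h3 hγ0.le
    linarith
  have hcard : ∀ r : ℝ, ∑ _j : Fin n, r = n * r := by intro r; simp
  have hsumX : ∑ j, ⟪a j - b j + mb, wt - wstar⟫ = ∑ j, ⟪a j, wt - wstar⟫ := by
    rw [← sum_inner, ← sum_inner, Finset.sum_add_distrib, Finset.sum_sub_distrib, hmb]
    simp [Nat.cast_smul_eq_nsmul]
  have hSP := Finset.sum_le_sum (fun j (_ : j ∈ Finset.univ) => hdist j)
  simp only [Finset.sum_add_distrib, Finset.sum_sub_distrib, ← Finset.mul_sum, hcard,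
    hsumX] at hSP
  have hSX : ∑ j, ‖a j - b j + mb‖ ^ 2 ≤
      9 * ∑ j, ‖a j‖ ^ 2 + 9 / 8 * ∑ j, ‖b j‖ ^ 2 - 8 * (n * ‖ma‖ ^ 2) := by
    linarith [aux_saga a b ma mb hma hmb]
  have hM1 : ∀ j, μ * d ^ 2 ≤ ⟪a j, wt - wstar⟫ ∧ B j wt ≤ ⟪a j, wt - wstar⟫ - μ / 2 * d ^ 2 := by
    intro j
    have h1 := hsc j wt wstar
    have h2 := hsc j wstar wt
    rw [← neg_sub wt wstar, inner_neg_right, norm_neg] at h2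
    simp only [a, B, inner_sub_left]
    constructor <;> linarith
  have hSM := Finset.sum_le_sum (fun j (_ : j ∈ Finset.univ) => (hM1 j).1)
  have hSK : ∑ j, B j wt ≤ ∑ j, ⟪a j, wt - wstar⟫ - n * (μ / 2 * d ^ 2) := by
    rw [← hcard, ← Finset.sum_sub_distrib]
    exact Finset.sum_le_sum (fun j (_ : j ∈ Finset.univ) => (hM1 j).2)
  have hSA := Finset.sum_le_sum (fun j (_ : j ∈ Finset.univ) =>
    aux_coer hμL (hsc j) (hdesc j) wt wstar)
  have hSB := Finset.sum_le_sum (fun j (_ : j ∈ Finset.univ) => hBL j (φ j))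
  rw [hcard] at hSM
  rw [Finset.sum_add_distrib, hcard, ← Finset.mul_sum] at hSA
  rw [← Finset.mul_sum] at hSB
  have hSM0 : 0 ≤ ∑ j, ⟪a j, wt - wstar⟫ := le_trans (by positivity) hSM
  have hZ : μ * ∑ j, ⟪a j, wt - wstar⟫ ≤ n * ‖ma‖ ^ 2 := by
    have h1 : ∑ j, ⟪a j, wt - wstar⟫ = n * ⟪ma, wt - wstar⟫ := by
      rw [← sum_inner, hma, real_inner_smul_left]
    rw [h1] at hSM ⊢
    have h2 : ⟪ma, wt - wstar⟫ ≤ ‖ma‖ * d := real_inner_le_norm _ _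
    have h3 : μ * d ^ 2 ≤ ⟪ma, wt - wstar⟫ := le_of_mul_le_mul_left hSM hN
    have h4 : μ * d ≤ ‖ma‖ := by
      apply le_of_mul_le_mul_right _ hd
      linarith
    have h5 : μ * ⟪ma, wt - wstar⟫ ≤ ‖ma‖ ^ 2 := by
      nlinarith [norm_nonneg ma, mul_le_mul_of_nonneg_left h2 hμ.le]
    linarith [mul_le_mul_of_nonneg_left h5 hN.le]
  have hupd : ∀ j, ∑ i, B i (φ' j i) = ∑ i, B i (φ i) - B j (φ j) + B j wt := by
    intro j
    rw [hφ', ← Finset.add_sum_erase _ _ (Finset.mem_univ j),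
      ← Finset.add_sum_erase (a := j) _ (fun i => B i (φ i)) (Finset.mem_univ j)]
    have : ∑ i ∈ Finset.univ.erase j, B i (Function.update φ j wt i)
        = ∑ i ∈ Finset.univ.erase j, B i (φ i) := by
      apply Finset.sum_congr rfl
      intro i hi
      rw [Function.update_of_ne (Finset.ne_of_mem_erase hi)]
    rw [this, Function.update_self]; ring
  have hLHS : ∑ j, T (w' j) (φ' j) = (1 / n : ℝ) * (n * ∑ i, B i (φ i) - ∑ i, B i (φ i)
      + ∑ i, B i wt) + 2 / (n * γ) * ∑ j, ‖w' j - wstar‖ ^ 2 := by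
    simp only [hT', hupd, Finset.sum_add_distrib, Finset.sum_sub_distrib, ← Finset.mul_sum,
      hcard, hc]
  rw [hLHS, hT', hc]
  have hρ1 : 1 / τ * n ≤ 1 / 2 := by
    have h1 : 1 / τ ≤ 1 / (2 * (n : ℝ)) := hτ ▸ min_le_left _ _
    calc 1 / τ * n ≤ 1 / (2 * (n : ℝ)) * n := mul_le_mul_of_nonneg_right h1 hN.le
      _ = 1 / 2 := by field_simp
  have hρ2 : 1 / τ ≤ γ * μ / 2 := hτ ▸ min_le_right _ _
  have hSP2 : ∑ j, ‖w' j - wstar‖ ^ 2 ≤ n * d ^ 2 - 2 * γ * ∑ j, ⟪a j, wt - wstar⟫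
      + 2 * γ * (n * (q * d))
      + γ ^ 2 * ((1 + q) * ∑ j, ‖a j - b j + mb‖ ^ 2 + n * (q + q ^ 2)) := by
    linarith [hSP]
  exact aux_scalar hN hL hμ hμL hq hγ0 hγ1 hqd hρ1 hρ2
    (Finset.sum_nonneg fun i _ => hB0 i _) hSM0 hSK hSA hSB hZ
    hSX hSP2
end

section
/- Let μ > 0, M > 0, and let η ≥ 1 be a natural number. Define γ_t = η/(μ·(t+η)) and p_t = 1/(4·√(t+η)) for integers t ≥ 1. Let (a_t)_{t≥1} be nonnegative real numbers satisfying a_1 ≤ 4η²M/(μ²·(1+η)) and, for every t ≥ 1, a_{t+1} ≤ a_t + γ_t²·M − 2·γ_t·(1 − p_t)·μ·a_t + 2·γ_t·p_t·√M·√(a_t). Then for every t ≥ 1: a_t ≤ 4η²M/(μ²·(t+η)). -/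
/-- (Convergence of the iterates of A-SubSGDP.) With step sizes
`γ_t = η/(μ(t+η))` and failure probabilities `p_t = 1/(4√(t+η))`, any nonnegative
sequence satisfying `a_1 ≤ 4η²M/(μ²(1+η))` and the recursion
`a_{t+1} ≤ a_t + γ_t²M − 2γ_t(1−p_t)μ·a_t + 2γ_t p_t √M·√(a_t)` obeys
`a_t ≤ 4η²M/(μ²(t+η))` for all `t ≥ 1`. -/
theorem asubsgdp_iterate_convergence (μ M : ℝ) (hμ : 0 < μ) (hM : 0 < M)
    (η : ℕ) (hη : 1 ≤ η)
    (γ p : ℕ → ℝ)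
    (hγ : ∀ t : ℕ, γ t = (η : ℝ) / (μ * ((t : ℝ) + η)))
    (hp : ∀ t : ℕ, p t = 1 / (4 * Real.sqrt ((t : ℝ) + η)))
    (a : ℕ → ℝ)
    (ha0 : ∀ t : ℕ, 1 ≤ t → 0 ≤ a t)
    (ha1 : a 1 ≤ 4 * (η : ℝ) ^ 2 * M / (μ ^ 2 * (1 + η)))
    (hrec : ∀ t : ℕ, 1 ≤ t →
      a (t + 1) ≤ a t + (γ t) ^ 2 * M - 2 * γ t * (1 - p t) * μ * a t
        + 2 * γ t * p t * Real.sqrt M * Real.sqrt (a t)) :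
    ∀ t : ℕ, 1 ≤ t → a t ≤ 4 * (η : ℝ) ^ 2 * M / (μ ^ 2 * ((t : ℝ) + η)) := by
  intro t ht
  induction t, ht using Nat.le_induction with
  | base => simpa using ha1
  | succ t ht ih =>
    have hr := hrec t ht
    have h0 := ha0 t ht
    have hη' : (1 : ℝ) ≤ η := by exact_mod_cast hη
    have ht' : (1 : ℝ) ≤ t := by exact_mod_cast ht
    rw [hγ, hp] at hr
    push_cast
    have e : (t : ℝ) + 1 + η = ((t : ℝ) + η) + 1 := by ring
    rw [e]
    have hs : (2 : ℝ) ≤ (t : ℝ) + η := by linarith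
    generalize (t : ℝ) + η = s at hr ih hs ⊢
    generalize a (t + 1) = b at hr ⊢
    generalize a t = x at hr ih h0
    generalize (η : ℝ) = n at hr ih hη' ⊢
    have hspos : 0 < s := by linarith
    obtain ⟨r, hrdef⟩ : ∃ r, r = Real.sqrt s := ⟨_, rfl⟩
    have hr1 : 1 ≤ r := by rw [hrdef]; exact Real.one_le_sqrt.mpr (by linarith)
    have hrpos : 0 < r := by linarith
    have hrs : r ^ 2 = s := by rw [hrdef]; exact Real.sq_sqrt hspos.le
    rw [← hrdef] at hr
    obtain ⟨m, hm⟩ : ∃ m, m = Real.sqrt M := ⟨_, rfl⟩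
    have hmpos : 0 < m := by rw [hm]; exact Real.sqrt_pos.mpr hM
    have hmM : m ^ 2 = M := by rw [hm]; exact Real.sq_sqrt hM.le
    rw [← hm] at hr
    have hK : 0 < n * m / μ := by positivity
    obtain ⟨k, hk⟩ : ∃ k, k = n * m / μ := ⟨_, rfl⟩
    rw [← hk] at hK
    have hk2 : k ^ 2 = n ^ 2 * M / μ ^ 2 := by rw [hk, ← hmM]; ring
    have ih' : x ≤ 4 * k ^ 2 / s := by
      rw [hk2]; convert ih using 1; field_simp
    have hgoal : 4 * n ^ 2 * M / (μ ^ 2 * (s + 1)) = 4 * k ^ 2 / (s + 1) := by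
      rw [hk2]; field_simp
    rw [hgoal]
    have hy : Real.sqrt x ≤ 2 * k / r := by
      apply Real.sqrt_le_iff.mpr
      refine ⟨by positivity, ih'.trans (le_of_eq ?_)⟩
      rw [← hrs]; ring
    have t1 : (n / (μ * s)) ^ 2 * M = k ^ 2 / s ^ 2 := by
      rw [hk2]; field_simp
    have t3 : 2 * (n / (μ * s)) * (1 / (4 * r)) * m * Real.sqrt x ≤ k ^ 2 / s ^ 2 := by
      calc 2 * (n / (μ * s)) * (1 / (4 * r)) * m * Real.sqrt x
          = k / (2 * s * r) * Real.sqrt x := by rw [hk]; field_simp; ring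
        _ ≤ k / (2 * s * r) * (2 * k / r) := by gcongr
        _ = k ^ 2 / s ^ 2 := by
          rw [← hrs]; field_simp
    have hp4 : 1 / (4 * r) ≤ 1 / 4 := by
      apply one_div_le_one_div_of_le <;> linarith
    have t2 : 3 / 2 / s * x ≤ 2 * (n / (μ * s)) * (1 - 1 / (4 * r)) * μ * x := by
      apply mul_le_mul_of_nonneg_right _ h0
      have : 2 * (n / (μ * s)) * (1 - 1 / (4 * r)) * μ = (2 * n * (1 - 1 / (4 * r))) / s := by
        field_simp
      rw [this]
      gcongr
      nlinarith
    have hc : 0 ≤ 1 - 3 / 2 / s := by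
      rw [sub_nonneg, div_le_one hspos]; linarith
    have h5 := mul_le_mul_of_nonneg_left ih' hc
    have h6 : b ≤ (1 - 3 / 2 / s) * (4 * k ^ 2 / s) + 2 * (k ^ 2 / s ^ 2) := by
      rw [t1] at hr
      linarith
    refine h6.trans ?_
    have h7 : (1 - 3 / 2 / s) * (4 * k ^ 2 / s) + 2 * (k ^ 2 / s ^ 2)
        = 4 * k ^ 2 * (s - 1) / s ^ 2 := by
      field_simp; ring
    rw [h7, div_le_div_iff₀ (by positivity) (by positivity)]
    nlinarith [sq_nonneg k]
end

section
/- Let μ > 0, M > 0, let η ≥ 1 and T ≥ 0 be natural numbers, and define weights p(t) = ∏_{k=1}^{η}(t+k) / Σ_{s=0}^{T} ∏_{k=1}^{η}(s+k) for t = 0,…,T. Let e_0,…,e_T be nonnegative real numbers satisfying e_t ≤ (4/3)·( η·M/(μ·(t+η)) + η²·M/(μ·(t+η)^{3/2}) ) for each t. Then Σ_{t=0}^{T} p(t)·e_t ≤ 16·η^{3/2}·M / (3·μ·(T+η)). -/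
theorem prod_telescope_aux (m T : ℕ) :
    ∑ s ∈ Finset.range (T + 1), ∏ k ∈ Finset.range m, ((s : ℝ) + k + 1) =
      (∏ k ∈ Finset.range (m + 1), ((T : ℝ) + k + 1)) / ((m : ℝ) + 1) := by
  have hm : (m : ℝ) + 1 ≠ 0 := by positivity
  induction T with
  | zero =>
    rw [Finset.sum_range_one, Finset.prod_range_succ]
    push_cast
    rw [zero_add, mul_div_assoc, div_self hm, mul_one]
  | succ T ih =>
    rw [Finset.sum_range_succ, ih, Finset.prod_range_succ', Finset.prod_range_succ]
    have h : ∏ k ∈ Finset.range m, ((T : ℝ) + ((k + 1 : ℕ) : ℝ) + 1) =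
        ∏ k ∈ Finset.range m, (((T + 1 : ℕ) : ℝ) + k + 1) := by
      refine Finset.prod_congr rfl fun k _ => ?_
      push_cast
      ring
    rw [h]
    field_simp
    push_cast
    ring

/-- (Convergence of A-SubSGDP with polynomial-decay averaging.)
With weights `p(t) ∝ (t+1)(t+2)⋯(t+η)` normalized over `t = 0,…,T`, if each expected
suboptimality satisfies `e_t ≤ (4/3)(ηM/(μ(t+η)) + η²M/(μ(t+η)^{3/2}))`, then the
weighted average satisfies `Σ_{t=0}^T p(t)·e_t ≤ 16·η^{3/2}·M/(3μ(T+η))`. -/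
theorem asubsgdp_weighted_average_convergence (μ M : ℝ) (hμ : 0 < μ) (hM : 0 < M)
    (η T : ℕ) (hη : 1 ≤ η)
    (p : ℕ → ℝ)
    (hp : ∀ t : ℕ, p t =
      (∏ k ∈ Finset.range η, ((t : ℝ) + k + 1)) /
        ∑ s ∈ Finset.range (T + 1), ∏ k ∈ Finset.range η, ((s : ℝ) + k + 1))
    (e : ℕ → ℝ)
    (he0 : ∀ t ∈ Finset.range (T + 1), 0 ≤ e t)
    (he : ∀ t ∈ Finset.range (T + 1),
      e t ≤ (4 / 3) * ((η : ℝ) * M / (μ * ((t : ℝ) + η))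
        + (η : ℝ) ^ 2 * M / (μ * ((t : ℝ) + η) ^ ((3 : ℝ) / 2)))) :
    ∑ t ∈ Finset.range (T + 1), p t * e t ≤
      16 * (η : ℝ) ^ ((3 : ℝ) / 2) * M / (3 * μ * ((T : ℝ) + η)) := by
  obtain ⟨n, rfl⟩ : ∃ n, η = n + 1 := ⟨η - 1, by omega⟩
  set K : ℝ := (8 / 3) * (M / μ) * ((n + 1 : ℕ) : ℝ) ^ ((3 : ℝ) / 2) with hK
  have hη1 : (1 : ℝ) ≤ ((n + 1 : ℕ) : ℝ) := by exact_mod_cast hη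
  have hr : ∀ x : ℝ, 0 < x → x ^ ((3 : ℝ) / 2) = x * √x := by
    intro x hx
    rw [show (3 : ℝ) / 2 = 1 + 1 / 2 by norm_num, Real.rpow_add hx, Real.rpow_one,
      Real.sqrt_eq_rpow]
  have hKpos : 0 < K := by positivity
  have hS := prod_telescope_aux (n + 1) T
  have hB := prod_telescope_aux n T
  set S : ℝ := ∑ s ∈ Finset.range (T + 1), ∏ k ∈ Finset.range (n + 1), ((s : ℝ) + k + 1) with hSdef
  have hC : 0 < ∏ k ∈ Finset.range (n + 1), ((T : ℝ) + k + 1) :=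
    Finset.prod_pos fun k _ => by positivity
  rw [Finset.prod_range_succ] at hS
  set C : ℝ := ∏ k ∈ Finset.range (n + 1), ((T : ℝ) + k + 1) with hCdef
  have hSpos : 0 < S := by rw [hS]; positivity
  have hterm : ∀ t ∈ Finset.range (T + 1),
      p t * e t ≤ (∏ k ∈ Finset.range n, ((t : ℝ) + k + 1)) * (K / S) := by
    intro t ht
    have hP : 0 < ∏ k ∈ Finset.range n, ((t : ℝ) + k + 1) :=
      Finset.prod_pos fun k _ => by positivity
    have hx : (0 : ℝ) < (t : ℝ) + ((n + 1 : ℕ) : ℝ) := by positivity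
    have hE : e t ≤ K / ((t : ℝ) + ((n + 1 : ℕ) : ℝ)) := by
      refine (he t ht).trans ?_
      rw [hK, hr _ hx, hr _ (by linarith)]
      set a : ℝ := ((n + 1 : ℕ) : ℝ)
      have hs1 : 1 ≤ √a := Real.one_le_sqrt.mpr hη1
      have hs2 : √a ≤ √((t : ℝ) + a) := Real.sqrt_le_sqrt (by
        have : (0 : ℝ) ≤ t := by positivity
        linarith)
      have hsq : √a * √a = a := Real.mul_self_sqrt (by linarith)
      have h1 : a ^ 2 * M / (μ * (((t : ℝ) + a) * √((t : ℝ) + a))) ≤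
          a ^ 2 * M / (μ * (((t : ℝ) + a) * √a)) := by
        gcongr
      have h2 : a ^ 2 * M / (μ * (((t : ℝ) + a) * √a)) = a * √a * M / (μ * ((t : ℝ) + a)) := by
        rw [div_eq_div_iff (by positivity) (by positivity)]
        linear_combination (-(a * M * μ * (t + a))) * hsq
      have h3 : a * M / (μ * ((t : ℝ) + a)) ≤ a * √a * M / (μ * ((t : ℝ) + a)) := by
        gcongr
        nlinarith
      have h4 : 8 / 3 * (M / μ) * (a * √a) / ((t : ℝ) + a) =
          (8 / 3) * (a * √a * M / (μ * ((t : ℝ) + a))) := by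
        field_simp
      rw [h4]
      linarith
    rw [hp t, Finset.prod_range_succ]
    calc _ ≤ (∏ k ∈ Finset.range n, ((t : ℝ) + k + 1)) * ((t : ℝ) + n + 1) / S *
          (K / ((t : ℝ) + ((n + 1 : ℕ) : ℝ))) := by gcongr
      _ = _ := by
        push_cast
        field_simp
        try ring
  refine (Finset.sum_le_sum hterm).trans ?_
  rw [← Finset.sum_mul, hB, hS]
  have h5 : C / ((n : ℝ) + 1) * (K / (C * ((T : ℝ) + ((n + 1 : ℕ) : ℝ) + 1) /
      (((n + 1 : ℕ) : ℝ) + 1))) =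
      K * ((n + 2) / ((n + 1) * ((T : ℝ) + n + 2))) := by
    push_cast
    have : (T : ℝ) + (n + 1) + 1 = T + n + 2 := by ring
    rw [this]
    field_simp
    try ring
  have h6 : ((n : ℝ) + 2) / ((n + 1) * ((T : ℝ) + n + 2)) ≤ 2 / ((T : ℝ) + ((n + 1 : ℕ) : ℝ)) := by
    push_cast
    rw [div_le_div_iff₀ (by positivity) (by positivity)]
    have : (0 : ℝ) ≤ T := by positivity
    have : (0 : ℝ) ≤ n := by positivity
    nlinarith [mul_nonneg ‹(0 : ℝ) ≤ T› ‹(0 : ℝ) ≤ n›]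
  rw [h5]
  refine (mul_le_mul_of_nonneg_left h6 hKpos.le).trans (le_of_eq ?_)
  rw [hK]
  field_simp
  try norm_num
end
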